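/- The Mellin convolution is jointly sequentially continuous on 𝒮(ℝ₊): if (f_n), (g_n) are sequences in 𝒮(ℝ₊) and f, g ∈ 𝒮(ℝ₊) are such that p_{α,β}(f_n − f) → 0 and p_{α,β}(g_n − g) → 0 as n → ∞ for every α ∈ ℤ and β ∈ ℕ, then p_{α,β}(f_n⋆g_n − f⋆g) → 0 as n → ∞ for every α ∈ ℤ and β ∈ ℕ. -/

import Mathlib

/-!
Differentiating under the integral sign gives, for `x > 0`,
`(f ⋆ g)^(β)(x) = ∫₀^∞ y^{-(β+1)} f^(β)(x/y) g(y) dy` (`mconvDeriv`, `hasDerivAt_mconvDeriv`).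
Writing `x^α = (x/y)^α y^α`, the integrand times `x^α` is the product of `(x/y)^α f^(β)(x/y)` and
`y^{α-β-1} g(y)`; the first factor is at most `p_{α,β}(f)`, the second at most
`(p_{α-β-1,0}(g) + p_{α-β+1,0}(g)) / (1 + y²)` (`kernel_bound`). Integrating,
`|x^α (f ⋆ g)^(β)(x)| ≤ C p_{α,β}(f) (p_{α-β-1,0}(g) + p_{α-β+1,0}(g))` with
`C = ∫₀^∞ dy / (1 + y²)`. The same pointwise bound supplies integrability and the domination needed
for differentiation. The theorem follows from the bilinear expansion
`a⋆b - c⋆d = (a-c)⋆(b-d) + (a-c)⋆d + c⋆(b-d)`.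
-/

open MeasureTheory Set Filter

/-- The Schwartz class `𝒮(ℝ₊)`: smooth functions on `(0,∞)` such that
`x^α f^(β)(x)` is bounded on `(0,∞)` for every `α ∈ ℤ`, `β ∈ ℕ`. -/
def MellinSchwartz (f : ℝ → ℝ) : Prop :=
  ContDiffOn ℝ (⊤ : ℕ∞) f (Set.Ioi 0) ∧
  ∀ (α : ℤ) (β : ℕ), ∃ M : ℝ, ∀ x ∈ Set.Ioi (0:ℝ),
    |x ^ α * iteratedDerivWithin β f (Set.Ioi 0) x| ≤ M

/-- The seminorm `p_{α,β}(f) = sup_{x>0} |x^α f^(β)(x)|`. -/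
noncomputable def pSemi (α : ℤ) (β : ℕ) (f : ℝ → ℝ) : ℝ :=
  ⨆ x : Set.Ioi (0:ℝ), |(x:ℝ) ^ α * iteratedDerivWithin β f (Set.Ioi 0) (x:ℝ)|

/-- The Mellin convolution `f⋆g(x) = ∫₀^∞ y⁻¹ f(x y⁻¹) g(y) dy`. -/
noncomputable def mconv (f g : ℝ → ℝ) : ℝ → ℝ :=
  fun x => ∫ y in Set.Ioi (0:ℝ), y⁻¹ * f (x * y⁻¹) * g y

lemma iteratedDerivWithin_sub_of_smooth {f g : ℝ → ℝ} (hf : ContDiffOn ℝ (⊤ : ℕ∞) f (Ioi 0))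
    (hg : ContDiffOn ℝ (⊤ : ℕ∞) g (Ioi 0)) (β : ℕ) {x : ℝ} (hx : x ∈ Ioi (0:ℝ)) :
    iteratedDerivWithin β (fun x => f x - g x) (Ioi 0) x =
      iteratedDerivWithin β f (Ioi 0) x - iteratedDerivWithin β g (Ioi 0) x :=
  iteratedDerivWithin_sub hx (uniqueDiffOn_Ioi 0)
    ((hf x hx).of_le (by exact_mod_cast le_top)) ((hg x hx).of_le (by exact_mod_cast le_top))

lemma MellinSchwartz.sub {f g : ℝ → ℝ} (hf : MellinSchwartz f) (hg : MellinSchwartz g) :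
    MellinSchwartz (fun x => f x - g x) := by
  refine ⟨hf.1.sub hg.1, fun α β => ?_⟩
  obtain ⟨M, hM⟩ := hf.2 α β
  obtain ⟨N, hN⟩ := hg.2 α β
  refine ⟨M + N, fun x hx => ?_⟩
  rw [iteratedDerivWithin_sub_of_smooth hf.1 hg.1 β hx, mul_sub]
  exact (abs_sub _ _).trans (add_le_add (hM x hx) (hN x hx))

lemma MellinSchwartz.le_pSemi {f : ℝ → ℝ} (hf : MellinSchwartz f) (α : ℤ) (β : ℕ) {x : ℝ}
    (hx : 0 < x) : |x ^ α * iteratedDerivWithin β f (Ioi 0) x| ≤ pSemi α β f := by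
  obtain ⟨M, hM⟩ := hf.2 α β
  refine le_ciSup (f := fun x : Ioi (0:ℝ) =>
    |(x:ℝ) ^ α * iteratedDerivWithin β f (Ioi 0) (x:ℝ)|) ⟨M, ?_⟩ (⟨x, hx⟩ : Ioi (0:ℝ))
  rintro _ ⟨y, rfl⟩
  exact hM y y.2

lemma pSemi_nonneg (α : ℤ) (β : ℕ) (f : ℝ → ℝ) : 0 ≤ pSemi α β f :=
  Real.iSup_nonneg fun _ => abs_nonneg _

/-- Two seminorms of order zero control `y^k g(y)` by a multiple of the integrable weight
`1 / (1 + y²)`. -/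
lemma MellinSchwartz.decay {g : ℝ → ℝ} (hg : MellinSchwartz g) (k : ℤ) {y : ℝ} (hy : 0 < y) :
    |y ^ k * g y| ≤ (pSemi k 0 g + pSemi (k + 2) 0 g) * (1 + y ^ 2)⁻¹ := by
  have h1 := hg.le_pSemi k 0 hy
  have h2 := hg.le_pSemi (k + 2) 0 hy
  simp only [iteratedDerivWithin_zero] at h1 h2
  rw [← div_eq_mul_inv, le_div_iff₀ (by positivity)]
  have h3 : |y ^ (k + 2) * g y| = |y ^ k * g y| * y ^ 2 := by
    rw [zpow_add₀ hy.ne', show y ^ k * y ^ (2:ℤ) * g y = y ^ k * g y * y ^ 2 by norm_cast; ring,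
      abs_mul, abs_of_nonneg (sq_nonneg y)]
  rw [h3] at h2
  linarith

/-- The constant `p_{α,β}(f) (p_{α-β-1,0}(g) + p_{α-β+1,0}(g))`, which bounds
`p_{α,β}(f ⋆ g)` up to the factor `∫₀^∞ dy / (1 + y²)`. -/
noncomputable def convBound (α : ℤ) (β : ℕ) (f g : ℝ → ℝ) : ℝ :=
  pSemi α β f * (pSemi (α - β - 1) 0 g + pSemi (α - β - 1 + 2) 0 g)

/-- The `β`-th derivative in `x` of the integrand of the Mellin convolution. -/
noncomputable def mconvKernel (β : ℕ) (f g : ℝ → ℝ) (x y : ℝ) : ℝ :=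
  y⁻¹ ^ (β + 1) * iteratedDerivWithin β f (Ioi 0) (x * y⁻¹) * g y

/-- The `β`-th derivative of the Mellin convolution, in the form obtained by differentiating under
the integral sign. -/
noncomputable def mconvDeriv (β : ℕ) (f g : ℝ → ℝ) (x : ℝ) : ℝ :=
  ∫ y in Ioi (0:ℝ), mconvKernel β f g x y

lemma kernel_bound {f g : ℝ → ℝ} (hf : MellinSchwartz f) (hg : MellinSchwartz g) (α : ℤ) (β : ℕ)
    {x y : ℝ} (hx : 0 < x) (hy : 0 < y) :
    |x ^ α * mconvKernel β f g x y| ≤ convBound α β f g * (1 + y ^ 2)⁻¹ := by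
  have e : x ^ α * mconvKernel β f g x y =
      ((x * y⁻¹) ^ α * iteratedDerivWithin β f (Ioi 0) (x * y⁻¹)) * (y ^ (α - β - 1) * g y) := by
    have h1 : y⁻¹ ^ (β + 1) = y ^ (-(β:ℤ) - 1) := by
      rw [← zpow_natCast, inv_zpow', Nat.cast_add, Nat.cast_one]
      congr 1
      ring
    have h2 : y ^ (α - β - 1) = y ^ α * y ^ (-(β:ℤ) - 1) := by
      rw [← zpow_add₀ hy.ne']
      congr 1
      ring
    have h3 : y ^ α ≠ 0 := (zpow_pos hy α).ne'
    rw [mconvKernel, h1, h2, mul_zpow, inv_zpow]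
    field_simp
  rw [e, abs_mul, convBound, mul_assoc]
  exact mul_le_mul (hf.le_pSemi α β (mul_pos hx (inv_pos.2 hy))) (hg.decay _ hy) (abs_nonneg _)
    (pSemi_nonneg _ _ _)

lemma kernel_bound_zero {f g : ℝ → ℝ} (hf : MellinSchwartz f) (hg : MellinSchwartz g) (β : ℕ)
    {x y : ℝ} (hx : 0 < x) (hy : 0 < y) :
    ‖mconvKernel β f g x y‖ ≤ convBound 0 β f g * (1 + y ^ 2)⁻¹ := by
  simpa using kernel_bound hf hg 0 β hx hy

lemma integrableOn_weight (c : ℝ) :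
    Integrable (fun y : ℝ => c * (1 + y ^ 2)⁻¹) (volume.restrict (Ioi 0)) :=
  (integrable_inv_one_add_sq.const_mul c).integrableOn

lemma continuousOn_kernel {f g : ℝ → ℝ} (hf : MellinSchwartz f) (hg : MellinSchwartz g) (β : ℕ)
    {x : ℝ} (hx : 0 < x) : ContinuousOn (mconvKernel β f g x) (Ioi 0) := by
  have hinv : ContinuousOn (fun y : ℝ => y⁻¹) (Ioi 0) :=
    continuousOn_inv₀.mono fun y hy => ne_of_gt hy
  have hF : ContinuousOn (iteratedDerivWithin β f (Ioi 0)) (Ioi 0) :=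
    hf.1.continuousOn_iteratedDerivWithin (by exact_mod_cast le_top) (uniqueDiffOn_Ioi 0)
  exact ((hinv.pow _).mul (hF.comp (continuousOn_const.mul hinv)
    fun y hy => mul_pos hx (inv_pos.2 hy))).mul hg.1.continuousOn

lemma integrable_kernel {f g : ℝ → ℝ} (hf : MellinSchwartz f) (hg : MellinSchwartz g) (β : ℕ)
    {x : ℝ} (hx : 0 < x) : Integrable (mconvKernel β f g x) (volume.restrict (Ioi 0)) :=
  (integrableOn_weight (convBound 0 β f g)).mono'
    ((continuousOn_kernel hf hg β hx).aestronglyMeasurable measurableSet_Ioi)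
    ((ae_restrict_mem measurableSet_Ioi).mono fun _ hy => kernel_bound_zero hf hg β hx hy)

lemma hasDerivAt_kernel {f : ℝ → ℝ} (hf : MellinSchwartz f) (g : ℝ → ℝ) (β : ℕ)
    {x y : ℝ} (hx : 0 < x) (hy : 0 < y) :
    HasDerivAt (fun x => mconvKernel β f g x y) (mconvKernel (β + 1) f g x y) x := by
  have hu : 0 < x * y⁻¹ := mul_pos hx (inv_pos.2 hy)
  have hF : HasDerivAt (iteratedDerivWithin β f (Ioi 0))
      (iteratedDerivWithin (β + 1) f (Ioi 0) (x * y⁻¹)) (x * y⁻¹) := by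
    rw [iteratedDerivWithin_succ]
    exact ((hf.1.differentiableOn_iteratedDerivWithin
      (by exact_mod_cast WithTop.coe_lt_top _) (uniqueDiffOn_Ioi 0) _ hu).hasDerivWithinAt).hasDerivAt
      (Ioi_mem_nhds hu)
  have h := ((hF.comp x ((hasDerivAt_id x).mul_const y⁻¹)).const_mul (y⁻¹ ^ (β + 1))).mul_const (g y)
  refine h.congr_deriv ?_
  rw [mconvKernel]
  ring

lemma hasDerivAt_mconvDeriv {f g : ℝ → ℝ} (hf : MellinSchwartz f) (hg : MellinSchwartz g) (β : ℕ)
    {x : ℝ} (hx : 0 < x) :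
    HasDerivAt (mconvDeriv β f g) (mconvDeriv (β + 1) f g x) x := by
  refine (hasDerivAt_integral_of_dominated_loc_of_deriv_le
    (bound := fun y => convBound 0 (β + 1) f g * (1 + y ^ 2)⁻¹) (Ioi_mem_nhds hx)
    ?_ (integrable_kernel hf hg β hx) (integrable_kernel hf hg (β + 1) hx).aestronglyMeasurable
    ?_ (integrableOn_weight _) ?_).2
  · filter_upwards [Ioi_mem_nhds hx] with z hz
    exact (integrable_kernel hf hg β hz).aestronglyMeasurable
  · filter_upwards [ae_restrict_mem measurableSet_Ioi] with y hy z hz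
    exact kernel_bound_zero hf hg (β + 1) hz hy
  · filter_upwards [ae_restrict_mem measurableSet_Ioi] with y hy z hz
    exact hasDerivAt_kernel hf g β hz hy

lemma mconvDeriv_zero (f g : ℝ → ℝ) : mconvDeriv 0 f g = mconv f g := by
  funext x
  simp [mconvDeriv, mconvKernel, mconv]

lemma iteratedDerivWithin_mconv_sub {a b c d : ℝ → ℝ} (ha : MellinSchwartz a)
    (hb : MellinSchwartz b) (hc : MellinSchwartz c) (hd : MellinSchwartz d) (β : ℕ) :
    EqOn (iteratedDerivWithin β (fun x => mconv a b x - mconv c d x) (Ioi 0))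
      (fun x => mconvDeriv β a b x - mconvDeriv β c d x) (Ioi 0) := by
  induction β with
  | zero =>
    intro x _
    simp [mconvDeriv_zero]
  | succ β ih =>
    intro x hx
    rw [iteratedDerivWithin_succ, derivWithin_congr ih (ih hx)]
    exact (((hasDerivAt_mconvDeriv ha hb β hx).sub
      (hasDerivAt_mconvDeriv hc hd β hx)).hasDerivWithinAt).derivWithin (uniqueDiffOn_Ioi 0 x hx)

lemma mconvDeriv_sub_left {a c b : ℝ → ℝ} (ha : MellinSchwartz a) (hc : MellinSchwartz c)
    (hb : MellinSchwartz b) (β : ℕ) {x : ℝ} (hx : 0 < x) :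
    mconvDeriv β (fun x => a x - c x) b x = mconvDeriv β a b x - mconvDeriv β c b x := by
  rw [mconvDeriv, mconvDeriv, mconvDeriv,
    ← integral_sub (integrable_kernel ha hb β hx) (integrable_kernel hc hb β hx)]
  refine setIntegral_congr_fun measurableSet_Ioi fun y hy => ?_
  have hu : x * y⁻¹ ∈ Ioi (0:ℝ) := mul_pos hx (inv_pos.2 hy)
  simp only [mconvKernel]
  rw [iteratedDerivWithin_sub_of_smooth ha.1 hc.1 β hu]
  ring

lemma mconvDeriv_sub_right {a b d : ℝ → ℝ} (ha : MellinSchwartz a) (hb : MellinSchwartz b)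
    (hd : MellinSchwartz d) (β : ℕ) {x : ℝ} (hx : 0 < x) :
    mconvDeriv β a (fun x => b x - d x) x = mconvDeriv β a b x - mconvDeriv β a d x := by
  rw [mconvDeriv, mconvDeriv, mconvDeriv,
    ← integral_sub (integrable_kernel ha hb β hx) (integrable_kernel ha hd β hx)]
  refine setIntegral_congr_fun measurableSet_Ioi fun y _ => ?_
  simp only [mconvKernel]
  ring

lemma abs_mconvDeriv_le {f g : ℝ → ℝ} (hf : MellinSchwartz f) (hg : MellinSchwartz g) (α : ℤ)
    (β : ℕ) {x : ℝ} (hx : 0 < x) :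
    |x ^ α * mconvDeriv β f g x| ≤
      convBound α β f g * ∫ y in Ioi (0:ℝ), (1 + y ^ 2)⁻¹ := by
  rw [mconvDeriv, ← integral_const_mul, ← integral_const_mul, ← Real.norm_eq_abs]
  exact norm_integral_le_of_norm_le (integrableOn_weight _)
    ((ae_restrict_mem measurableSet_Ioi).mono fun y hy => kernel_bound hf hg α β hx hy)

lemma pSemi_mconv_sub_le {a b c d : ℝ → ℝ} (ha : MellinSchwartz a) (hb : MellinSchwartz b)
    (hc : MellinSchwartz c) (hd : MellinSchwartz d) (α : ℤ) (β : ℕ) :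
    pSemi α β (fun x => mconv a b x - mconv c d x) ≤
      (convBound α β (fun x => a x - c x) (fun x => b x - d x)
        + convBound α β (fun x => a x - c x) d + convBound α β c (fun x => b x - d x))
        * ∫ y in Ioi (0:ℝ), (1 + y ^ 2)⁻¹ := by
  have : Nonempty (Ioi (0:ℝ)) := ⟨⟨1, mem_Ioi.2 one_pos⟩⟩
  refine ciSup_le fun x => ?_
  obtain ⟨x, hx⟩ := x
  have e : mconvDeriv β a b x - mconvDeriv β c d x =
      mconvDeriv β (fun x => a x - c x) (fun x => b x - d x) x
        + mconvDeriv β (fun x => a x - c x) d x + mconvDeriv β c (fun x => b x - d x) x := by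
    rw [mconvDeriv_sub_left ha hc (hb.sub hd) β hx, mconvDeriv_sub_left ha hc hd β hx,
      mconvDeriv_sub_right ha hb hd β hx, mconvDeriv_sub_right hc hb hd β hx]
    ring
  simp only [iteratedDerivWithin_mconv_sub ha hb hc hd β hx, e, mul_add, add_mul]
  exact (abs_add_three _ _ _).trans (add_le_add_three
    (abs_mconvDeriv_le (ha.sub hc) (hb.sub hd) α β hx)
    (abs_mconvDeriv_le (ha.sub hc) hd α β hx) (abs_mconvDeriv_le hc (hb.sub hd) α β hx))

theorem mellin_convolution_continuous
    (f g : ℝ → ℝ) (fs gs : ℕ → ℝ → ℝ)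
    (hf : MellinSchwartz f) (hg : MellinSchwartz g)
    (hfs : ∀ n, MellinSchwartz (fs n)) (hgs : ∀ n, MellinSchwartz (gs n))
    (hfc : ∀ (α : ℤ) (β : ℕ),
      Filter.Tendsto (fun n => pSemi α β (fun x => fs n x - f x)) Filter.atTop (nhds 0))
    (hgc : ∀ (α : ℤ) (β : ℕ),
      Filter.Tendsto (fun n => pSemi α β (fun x => gs n x - g x)) Filter.atTop (nhds 0)) :
    ∀ (α : ℤ) (β : ℕ),
      Filter.Tendsto (fun n => pSemi α β (fun x => mconv (fs n) (gs n) x - mconv f g x))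
        Filter.atTop (nhds 0) := by
  intro α β
  refine squeeze_zero (fun n => pSemi_nonneg _ _ _)
    (fun n => pSemi_mconv_sub_le (hfs n) (hgs n) hf hg α β) ?_
  have hF := hfc α β
  have hG := (hgc (α - β - 1) 0).add (hgc (α - β - 1 + 2) 0)
  have h := ((((hF.mul hG).add (hF.mul_const (pSemi (α - β - 1) 0 g
    + pSemi (α - β - 1 + 2) 0 g))).add (hG.const_mul (pSemi α β f)))).mul_const
    (∫ y in Ioi (0:ℝ), (1 + y ^ 2)⁻¹)
  simpa only [convBound, add_zero, mul_zero, zero_mul] using h
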